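/- For n ≥ 2 let G'_n be the graph whose vertices are the maximal isotropic subspaces of (ZMod 2)^{2n} containing a fixed one-dimensional isotropic subspace w, with x adjacent to y iff dim(x∩y) = n−1, and let R_n = λ(G'_n)/max Spec(G'_n) be its spectral ratio. Then log₂ R_n → −1 as n → ∞ (equivalently, R_n → 1/2). -/

import Mathlib

open Finset

abbrev F2 := ZMod 2
/-- `F2^{2n}`, split into the first and last `n` coordinates. -/
abbrev PV (n : ℕ) := (Fin n → F2) × (Fin n → F2)

/-- Symplectic product on `F2^{2n}`: zero iff `a₁·b₂ = a₂·b₁`. -/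
def symp {n : ℕ} (a b : PV n) : F2 :=
  (∑ i, a.1 i * b.2 i) + (∑ i, a.2 i * b.1 i)

/-- A subspace is isotropic if the symplectic product vanishes on it. -/
def IsIsotropic {n : ℕ} (S : Submodule F2 (PV n)) : Prop :=
  ∀ x ∈ S, ∀ y ∈ S, symp x y = 0

/-- `Lset n k` = `L^n_k`, the set of `k`-dimensional isotropic subspaces of `F2^{2n}`. -/
def Lset (n k : ℕ) : Set (Submodule F2 (PV n)) :=
  {S | IsIsotropic S ∧ Module.finrank F2 S = k}

/-- Integer lift of a vector over `F2`, with values in `{0,1} ⊆ ℤ`. -/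
def liftZ {n : ℕ} (v : Fin n → F2) : Fin n → ℤ := fun i => ((v i).val : ℤ)

def dotZ {n : ℕ} (a b : Fin n → ℤ) : ℤ := ∑ i, a i * b i

/-- The phase `i^{x̂₁·x̂₂} · i^{ŷ₁·ŷ₂} · i^{−((x+y)^^₁·(x+y)^^₂)} · (−1)^{x̂₂·ŷ₁}`. -/
noncomputable def phase {n : ℕ} (x y : PV n) : ℂ :=
  Complex.I ^ (dotZ (liftZ x.1) (liftZ x.2)) *
  Complex.I ^ (dotZ (liftZ y.1) (liftZ y.2)) *
  Complex.I ^ (-(dotZ (liftZ (x + y).1) (liftZ (x + y).2))) *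
  (-1 : ℂ) ^ (dotZ (liftZ x.2) (liftZ y.1))

/-- `w(x,y) ∈ {0,1} ⊆ F2`: zero iff the phase equals `1`. -/
noncomputable def wght {n : ℕ} (x y : PV n) : F2 :=
  if phase x y = 1 then 0 else 1

/-- An outcome of an isotropic subspace `S` is `f : S → F2` with
`f(x+y) = f(x)+f(y)+w(x,y)`. -/
def IsOutcome {n : ℕ} (S : Submodule F2 (PV n)) (f : S → F2) : Prop :=
  ∀ x y : S, f (x + y) = f x + f y + wght (x : PV n) (y : PV n)

/-- Two outcomes are consistent if they agree on the intersection of their domains. -/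
def ConsistentOn {n : ℕ} {S₁ S₂ : Submodule F2 (PV n)} (f₁ : S₁ → F2) (f₂ : S₂ → F2) : Prop :=
  ∀ v (h1 : v ∈ S₁) (h2 : v ∈ S₂), f₁ ⟨v, h1⟩ = f₂ ⟨v, h2⟩

open scoped Classical

noncomputable instance {n : ℕ} : Fintype (Submodule F2 (PV n)) := by
  have : Finite (Submodule F2 (PV n)) :=
    Finite.of_injective (fun S => (S : Set (PV n))) SetLike.coe_injective
  exact Fintype.ofFinite _

/-- Adjacency matrix (over `ℝ`) of the graph with adjacency relation `Adj`. -/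
noncomputable def adjMat {V : Type*} [Fintype V] (Adj : V → V → Prop) : Matrix V V ℝ :=
  fun x y => if Adj x y then 1 else 0

/-- The set of eigenvalues of a matrix. -/
def eigSet {V : Type*} [Fintype V] (A : Matrix V V ℝ) : Set ℝ :=
  {μ | ∃ v : V → ℝ, v ≠ 0 ∧ A.mulVec v = μ • v}

/-- The largest eigenvalue. -/
noncomputable def maxEig {V : Type*} [Fintype V] (A : Matrix V V ℝ) : ℝ :=
  sSup (eigSet A)

/-- The spectral parameter: the second largest element of `{|μ| : μ ∈ Spec(A)}`. -/
noncomputable def specParam {V : Type*} [Fintype V] (A : Matrix V V ℝ) : ℝ :=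
  sSup ((abs '' eigSet A) \ {sSup (abs '' eigSet A)})

/-- Vertices of `G'_n`: the maximal isotropic subspaces of `F2^{2n}` containing `w`. -/
abbrev GVtx (n : ℕ) (w : Submodule F2 (PV n)) :=
  {x : Submodule F2 (PV n) // x ∈ Lset n n ∧ w ≤ x}

/-- The adjacency matrix of the graph on `GVtx n w` where `x ∼ y` iff `dim(x∩y) = k`. -/
noncomputable def adjG (n : ℕ) (w : Submodule F2 (PV n)) (k : ℕ) :
    Matrix (GVtx n w) (GVtx n w) ℝ :=
  adjMat (fun x y => Module.finrank F2 ↥(x.1 ⊓ y.1) = k)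

/-!
Let `B` be a nondegenerate alternating form on a vector space over a field of `q` elements, let `w`
be isotropic of codimension `m` in the Lagrangian subspaces containing it, and let `A` be the
adjacency matrix of the graph of those subspaces, adjacent when they meet in a hyperplane. For an
isotropic `u ≥ w` of dimension `dim w + i`, the indicator function `χ u` of the Lagrangian subspaces
containing `u` satisfies `A χ u = (q [m - i] - [i]) • χ u + ∑ χ v`, where `v` runs over the
hyperplanes of `u` containing `w` and `[k]` is the `q`-integer. Thus `A` acts triangularly on a
spanning family, and every eigenvalue has the form `q [m - i] - [i]` with `i ≤ m`. The value `q [m]`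
at `i = 0` is attained by the constant function, and all others have absolute value at most `[m]`.
The value `-[m]` at `i = m` is attained by `x ↦ (-q) ^ dim (x ⊓ x₀)`, whose sum over the `q + 1`
Lagrangian subspaces through a given `v` of codimension one vanishes: one of them, the projection of
`x₀`, meets `x₀` in one dimension more than the other `q` do. Hence the spectral ratio is exactly
`1 / q`.
-/

section Hyperplanes

open Module

theorem covBy_and_le_iff_of_not_le {α : Type*} [SemilatticeInf α] {u v x : α} (hux : ¬ u ≤ x) :
    v ⋖ u ∧ v ≤ x ↔ v = x ⊓ u ∧ x ⊓ u ⋖ u := by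
  constructor
  · rintro ⟨hvu, hvx⟩
    have heq : x ⊓ u = v := (hvu.eq_or_eq (le_inf hvx hvu.le) inf_le_right).resolve_right
      fun h => hux (inf_eq_right.1 h)
    exact ⟨heq.symm, heq ▸ hvu⟩
  · rintro ⟨rfl, h⟩
    exact ⟨h, inf_le_left⟩

variable {K V : Type*} [Field K] [AddCommGroup V] [Module K V] {u v w : Submodule K V}

theorem exists_sup_span_singleton_eq_of_covBy (h : v ⋖ u) :
    ∃ p ∉ v, v ⊔ Submodule.span K {p} = u := by
  obtain ⟨p, hpu, hpv⟩ := SetLike.exists_of_lt h.lt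
  exact ⟨p, hpv, (h.eq_or_eq le_sup_left (sup_le h.le (by simpa))).resolve_left (by simpa)⟩

theorem inf_ker_covBy {φ : Dual K V} (hφ : φ ∉ u.dualAnnihilator) :
    u ⊓ LinearMap.ker φ ⋖ u := by
  have hker : ¬ u ≤ LinearMap.ker φ := fun h =>
    hφ ((Submodule.mem_dualAnnihilator φ).2 fun a ha => h ha)
  have hφ0 : φ ≠ 0 := by rintro rfl; simp at hker
  have hcoatom : IsCoatom (LinearMap.ker φ) :=
    LinearMap.isCoatom_ker_of_surjective (LinearMap.surjective hφ0)
  have hsup : u ⊔ LinearMap.ker φ = ⊤ := hcoatom.2 _ (right_lt_sup.2 hker)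
  rw [inf_comm]
  exact inf_covBy_of_covBy_sup_left (by rw [sup_comm, hsup]; exact hcoatom.covBy_top)

theorem inf_ker_eq_iff (hvu : v ⋖ u) {φ : Dual K V} (hφ : φ ∉ u.dualAnnihilator) :
    u ⊓ LinearMap.ker φ = v ↔ φ ∈ v.dualAnnihilator := by
  rw [Submodule.mem_dualAnnihilator]
  constructor
  · rintro rfl a ha
    exact ha.2
  · intro h
    exact (hvu.eq_or_eq (le_inf hvu.le h) inf_le_left).resolve_right (inf_ker_covBy hφ).ne

/-- The `q`-integer `[k]_q = 1 + q + ⋯ + q ^ (k - 1)`, which counts the points, and dually the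
hyperplanes, of the projective space of a `k`-dimensional vector space over a field of `q`
elements. -/
def qInteger (q k : ℕ) : ℕ := ∑ i ∈ range k, q ^ i

theorem qInteger_succ (q k : ℕ) : qInteger q (k + 1) = q * qInteger q k + 1 :=
  geom_sum_succ

theorem qInteger_mul_sub_one_add_one {q : ℕ} (hq : 0 < q) (k : ℕ) :
    qInteger q k * (q - 1) + 1 = q ^ k := by
  obtain ⟨r, rfl⟩ := Nat.exists_eq_add_one.2 hq
  exact geom_sum_mul_add r k

theorem qInteger_mono (q : ℕ) : Monotone (qInteger q) :=
  fun _ _ h => sum_le_sum_of_subset (range_mono h)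

theorem qInteger_pos {q k : ℕ} (hk : 0 < k) : 0 < qInteger q k :=
  (by simp [qInteger] : 0 < qInteger q 1).trans_le (qInteger_mono q hk)

/-- The hyperplanes of `u` that contain `w`. -/
noncomputable def hyperplanes [Fintype (Submodule K V)] (w u : Submodule K V) :
    Finset (Submodule K V) := {v | w ≤ v ∧ v ⋖ u}

theorem mem_hyperplanes [Fintype (Submodule K V)] : v ∈ hyperplanes w u ↔ w ≤ v ∧ v ⋖ u := by
  simp [hyperplanes]

theorem mapsTo_inf_ker_hyperplanes [Fintype (Submodule K V)] (hwu : w ≤ u) :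
    Set.MapsTo (fun φ : Dual K V => u ⊓ LinearMap.ker φ)
      ((w.dualAnnihilator : Set (Dual K V)) \ u.dualAnnihilator) (hyperplanes w u) :=
  fun φ hφ => mem_hyperplanes.2
    ⟨le_inf hwu ((Submodule.mem_dualAnnihilator φ).1 hφ.1), inf_ker_covBy hφ.2⟩

variable [FiniteDimensional K V]

theorem finrank_add_one_of_covBy (h : v ⋖ u) : finrank K v + 1 = finrank K u := by
  obtain ⟨p, hpv, hsup⟩ := exists_sup_span_singleton_eq_of_covBy h
  have hinf : v ⊓ Submodule.span K {p} = ⊥ :=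
    (Submodule.disjoint_span_singleton_of_notMem hpv).eq_bot
  have hp : p ≠ 0 := fun h0 => hpv (h0 ▸ v.zero_mem)
  have hdim := Submodule.finrank_sup_add_finrank_inf_eq v (Submodule.span K {p})
  rw [hsup, hinf, finrank_bot, finrank_span_singleton hp] at hdim
  exact hdim.symm

theorem covBy_iff_finrank_add_one (h : v ≤ u) :
    v ⋖ u ↔ finrank K v + 1 = finrank K u := by
  refine ⟨finrank_add_one_of_covBy, fun hvu => ⟨h.lt_of_ne ?_, fun z hvz hzu => ?_⟩⟩
  · rintro rfl
    omega
  · have := Submodule.finrank_lt_finrank_of_lt hvz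
    have := Submodule.finrank_lt_finrank_of_lt hzu
    omega

variable [Finite K]

theorem ncard_sdiff_add_pow_finrank {S T : Submodule K V} (h : T ≤ S) :
    ((S : Set V) \ T).ncard + Nat.card K ^ finrank K T
      = Nat.card K ^ finrank K S := by
  have : Finite V := finite_of_finite K
  rw [← natCard_eq_pow_finrank, ← natCard_eq_pow_finrank]
  exact Set.ncard_sdiff_add_ncard_of_subset h

theorem ncard_dualAnnihilator_sdiff (hwu : w ≤ u) :
    ((w.dualAnnihilator : Set (Dual K V)) \ u.dualAnnihilator).ncard
      = Nat.card K ^ finrank K u.dualAnnihilator * (Nat.card K - 1) *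
          qInteger (Nat.card K) (finrank K u - finrank K w) := by
  have hcard := ncard_sdiff_add_pow_finrank (Submodule.dualAnnihilator_anti hwu)
  have hw := Subspace.finrank_add_finrank_dualAnnihilator_eq w
  have hu := Subspace.finrank_add_finrank_dualAnnihilator_eq u
  have hle := Submodule.finrank_mono hwu
  have hdim : finrank K w.dualAnnihilator
      = finrank K u.dualAnnihilator + (finrank K u - finrank K w) := by omega
  rw [hdim, pow_add, ← qInteger_mul_sub_one_add_one Nat.card_pos (_ - _)] at hcard
  linarith

theorem card_hyperplanes [Fintype (Submodule K V)] (hwu : w ≤ u) :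
    #(hyperplanes w u) = qInteger (Nat.card K) (finrank K u - finrank K w) := by
  have : Finite (Dual K V) := finite_of_finite K
  have := Fintype.ofFinite (Dual K V)
  let S (v : Submodule K V) : Finset (Dual K V) :=
    ((v.dualAnnihilator : Set (Dual K V)) \ u.dualAnnihilator).toFinset
  have card_S {v : Submodule K V} (hvu : v ≤ u) : #(S v)
      = Nat.card K ^ finrank K u.dualAnnihilator * (Nat.card K - 1) *
          qInteger (Nat.card K) (finrank K u - finrank K v) := by
    rw [← ncard_dualAnnihilator_sdiff hvu, Set.ncard_eq_toFinset_card']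
  have card_fiber {v : Submodule K V} (hv : v ∈ hyperplanes w u) :
      #{φ ∈ S w | u ⊓ LinearMap.ker φ = v}
        = Nat.card K ^ finrank K u.dualAnnihilator * (Nat.card K - 1) := by
    obtain ⟨hwv, hvu⟩ := mem_hyperplanes.1 hv
    have hS : {φ ∈ S w | u ⊓ LinearMap.ker φ = v} = S v := by
      ext φ
      simp only [S, mem_filter, Set.mem_toFinset]
      exact ⟨fun h => ⟨(inf_ker_eq_iff hvu h.1.2).1 h.2, h.1.2⟩, fun h =>
        ⟨⟨Submodule.dualAnnihilator_anti hwv h.1, h.2⟩, (inf_ker_eq_iff hvu h.2).2 h.1⟩⟩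
    rw [hS, card_S hvu.le, ← finrank_add_one_of_covBy hvu]
    simp [qInteger]
  have hcount := card_eq_sum_card_fiberwise (s := S w)
    (by simpa [S] using mapsTo_inf_ker_hyperplanes hwu)
  rw [sum_congr rfl fun v hv => card_fiber hv, sum_const, smul_eq_mul, card_S hwu,
    mul_comm] at hcount
  have hpos : 0 < Nat.card K ^ finrank K u.dualAnnihilator * (Nat.card K - 1) :=
    Nat.mul_pos (pow_pos Nat.card_pos _) (Nat.sub_pos_of_lt Finite.one_lt_card)
  exact (Nat.eq_of_mul_eq_mul_right hpos hcount).symm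

end Hyperplanes

section Spectrum

open Matrix

variable {X Y : Type*} [Fintype X] [Fintype Y]

theorem eigSet_submatrix (A : Matrix Y Y ℝ) (e : X ≃ Y) :
    eigSet (A.submatrix e e) = eigSet A := by
  ext μ
  refine (e.arrowCongr (Equiv.refl ℝ)).exists_congr fun f => ?_
  change f ≠ 0 ∧ A.submatrix e e *ᵥ f = μ • f ↔
    f ∘ e.symm ≠ 0 ∧ A *ᵥ (f ∘ e.symm) = μ • (f ∘ e.symm)
  rw [submatrix_mulVec_equiv, ← e.surjective.injective_comp_right.eq_iff,
    ← e.symm.surjective.injective_comp_right.ne_iff]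
  simp [Function.comp_def, Pi.smul_def, Pi.zero_def]

theorem maxEig_submatrix (A : Matrix Y Y ℝ) (e : X ≃ Y) : maxEig (A.submatrix e e) = maxEig A := by
  rw [maxEig, eigSet_submatrix, maxEig]

theorem specParam_submatrix (A : Matrix Y Y ℝ) (e : X ≃ Y) :
    specParam (A.submatrix e e) = specParam A := by
  rw [specParam, eigSet_submatrix, specParam]

theorem dotProduct_eq_zero_of_mem_span {s : Set (X → ℝ)} {f g : X → ℝ}
    (h : ∀ g ∈ s, g ⬝ᵥ f = 0) (hg : g ∈ Submodule.span ℝ s) : g ⬝ᵥ f = 0 :=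
  (Submodule.span_le (p := LinearMap.ker ((dotProductBilin ℝ ℝ).flip f))).2 h hg

theorem eigSet_subset_range_of_isSymm {ι : Type*} [Preorder ι] [WellFoundedLT ι]
    {A : Matrix X X ℝ} (hA : A.IsSymm) {χ : ι → X → ℝ} {θ : ι → ℝ}
    (hχ : Submodule.span ℝ (Set.range χ) = ⊤)
    (h : ∀ i, A *ᵥ χ i - θ i • χ i ∈ Submodule.span ℝ (χ '' Set.Iio i)) :
    eigSet A ⊆ Set.range θ := by
  rintro μ ⟨f, hf, hAf⟩
  by_contra hμ
  have horth (i : ι) : χ i ⬝ᵥ f = 0 := by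
    induction i using WellFoundedLT.induction with
    | ind i ih =>
      have hlower : (A *ᵥ χ i - θ i • χ i) ⬝ᵥ f = 0 :=
        dotProduct_eq_zero_of_mem_span (Set.forall_mem_image.2 ih) (h i)
      have hsymm : A *ᵥ χ i ⬝ᵥ f = μ * (χ i ⬝ᵥ f) := by
        rw [← hA.eq, mulVec_transpose, ← dotProduct_mulVec, hAf, dotProduct_smul, smul_eq_mul]
      rw [sub_dotProduct, smul_dotProduct, hsymm, smul_eq_mul, ← sub_mul] at hlower
      exact (mul_eq_zero.1 hlower).resolve_left fun h0 => hμ ⟨i, (sub_eq_zero.1 h0).symm⟩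
  exact hf (dotProduct_self_eq_zero.1 (dotProduct_eq_zero_of_mem_span
    (Set.forall_mem_range.2 horth) (hχ ▸ Submodule.mem_top)))

theorem maxEig_eq_of_forall_eq_or_abs_le {A : Matrix X X ℝ} {k l : ℝ} (hk : k ∈ eigSet A)
    (hlk : l < k) (h : ∀ μ ∈ eigSet A, μ = k ∨ |μ| ≤ l) : maxEig A = k := by
  refine IsGreatest.csSup_eq ⟨hk, fun μ hμ => ?_⟩
  obtain rfl | hμl := h μ hμ
  · exact le_rfl
  · exact (le_abs_self μ).trans (hμl.trans hlk.le)

theorem specParam_eq_of_forall_eq_or_abs_le {A : Matrix X X ℝ} {k l : ℝ} (hk : k ∈ eigSet A)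
    (hl : l ∈ abs '' eigSet A) (hlk : l < k) (h : ∀ μ ∈ eigSet A, μ = k ∨ |μ| ≤ l) :
    specParam A = l := by
  have hk0 : 0 ≤ k := by
    obtain ⟨μ, -, rfl⟩ := hl
    exact (abs_nonneg μ).trans hlk.le
  have htop : sSup (abs '' eigSet A) = k := by
    refine IsGreatest.csSup_eq ⟨⟨k, hk, abs_of_nonneg hk0⟩, ?_⟩
    rintro _ ⟨μ, hμ, rfl⟩
    obtain rfl | hμl := h μ hμ
    · exact (abs_of_nonneg hk0).le
    · exact hμl.trans hlk.le
  rw [specParam, htop]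
  refine IsGreatest.csSup_eq ⟨⟨hl, hlk.ne⟩, ?_⟩
  rintro _ ⟨⟨μ, hμ, rfl⟩, hne⟩
  refine (h μ hμ).resolve_left ?_
  rintro rfl
  exact hne (abs_of_nonneg hk0)

end Spectrum

section Lagrangian

open Module
open LinearMap (BilinForm)

variable {K V : Type*} [Field K] [AddCommGroup V] [Module K V] {B : BilinForm K V}
  {u v x y : Submodule K V}

theorem le_orthogonal_comm (hR : B.IsRefl) : x ≤ B.orthogonal y ↔ y ≤ B.orthogonal x :=
  ⟨fun h b hb _ ha => hR _ _ (h ha b hb), fun h a ha _ hb => hR _ _ (h hb a ha)⟩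

theorem orthogonal_sup (hR : B.IsRefl) (x y : Submodule K V) :
    B.orthogonal (x ⊔ y) = B.orthogonal x ⊓ B.orthogonal y :=
  eq_of_forall_le_iff fun z => by
    rw [le_inf_iff, le_orthogonal_comm hR, sup_le_iff, le_orthogonal_comm hR,
      le_orthogonal_comm hR (x := y)]

theorem le_orthogonal_of_covBy (hB : B.IsAlt) (hvy : v ⋖ y) (hyv : y ≤ B.orthogonal v) :
    y ≤ B.orthogonal y := by
  obtain ⟨p, -, hsup⟩ := exists_sup_span_singleton_eq_of_covBy hvy
  have hpy : p ∈ y := hsup ▸ Submodule.mem_sup_right (Submodule.mem_span_singleton_self p)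
  have hp : Submodule.span K {p} ≤ B.orthogonal (Submodule.span K {p}) := by
    rw [Submodule.span_singleton_le_iff_mem]
    intro a ha
    obtain ⟨c, rfl⟩ := Submodule.mem_span_singleton.1 ha
    simp [hB p]
  conv_rhs => rw [← hsup, orthogonal_sup hB.isRefl]
  refine le_inf hyv ?_
  rw [← hsup]
  exact sup_le ((le_orthogonal_comm hB.isRefl).2 (by simpa using hyv hpy)) hp

/-- A subspace is Lagrangian if it is its own orthogonal complement. For a nondegenerate alternating
form on a space of dimension `2 * n` these are the `n`-dimensional isotropic subspaces. -/
def IsLagrangian (B : BilinForm K V) (x : Submodule K V) : Prop := B.orthogonal x = x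

theorem IsLagrangian.le_orthogonal (hx : IsLagrangian B x) (hu : u ≤ x) (hv : v ≤ x) :
    u ≤ B.orthogonal v :=
  hu.trans (hx.ge.trans (BilinForm.orthogonal_le hv))

theorem IsLagrangian.eq_of_le (hx : IsLagrangian B x) (hy : IsLagrangian B y) (h : x ≤ y) :
    x = y :=
  h.antisymm (hx ▸ hy.le_orthogonal le_rfl h)

/-- The projection of a Lagrangian subspace `x` to the Lagrangian subspaces containing a given
isotropic subspace `u`: the one which meets `x` in the largest subspace. -/
def lagrangianProj (B : BilinForm K V) (u x : Submodule K V) : Submodule K V :=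
  u ⊔ x ⊓ B.orthogonal u

theorem inf_lagrangianProj (hu : u ≤ B.orthogonal u) :
    x ⊓ lagrangianProj B u x = x ⊓ B.orthogonal u :=
  le_antisymm (inf_le_inf_left x (sup_le hu inf_le_right)) (le_inf inf_le_left le_sup_right)

theorem inf_le_inf_orthogonal (hy : IsLagrangian B y) (huy : u ≤ y) :
    x ⊓ y ≤ x ⊓ B.orthogonal u :=
  inf_le_inf_left x (hy.le_orthogonal le_rfl huy)

variable [FiniteDimensional K V]

theorem orthogonal_inf (hR : B.IsRefl) (hN : B.Nondegenerate) (x y : Submodule K V) :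
    B.orthogonal (x ⊓ y) = B.orthogonal x ⊔ B.orthogonal y := by
  rw [← BilinForm.orthogonal_orthogonal hN hR (_ ⊔ _), orthogonal_sup hR,
    BilinForm.orthogonal_orthogonal hN hR, BilinForm.orthogonal_orthogonal hN hR]

theorem finrank_orthogonal_add (hN : B.Nondegenerate) (x : Submodule K V) :
    finrank K (B.orthogonal x) + finrank K x = finrank K V := by
  rw [BilinForm.finrank_orthogonal hN, Nat.sub_add_cancel x.finrank_le]

theorem IsLagrangian.two_mul_finrank (hN : B.Nondegenerate) (hx : IsLagrangian B x) :
    2 * finrank K x = finrank K V := by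
  rw [← finrank_orthogonal_add hN x, hx, two_mul]

theorem isLagrangian_iff_le_orthogonal_and_two_mul_finrank (hN : B.Nondegenerate) :
    IsLagrangian B x ↔ x ≤ B.orthogonal x ∧ 2 * finrank K x = finrank K V := by
  refine ⟨fun hx => ⟨hx.ge, hx.two_mul_finrank hN⟩, ?_⟩
  rintro ⟨hx, hdim⟩
  have := finrank_orthogonal_add hN x
  exact (Submodule.eq_of_le_of_finrank_eq hx (by omega)).symm

theorem exists_isLagrangian_ge (hB : B.IsAlt) {w : Submodule K V} (hw : w ≤ B.orthogonal w) :
    ∃ x, IsLagrangian B x ∧ w ≤ x := by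
  obtain ⟨x, hwx, hx⟩ := exists_maximal_ge_of_wellFoundedGT (fun x => x ≤ B.orthogonal x) w hw
  refine ⟨x, (hx.1.eq_of_not_lt fun hlt => ?_).symm, hwx⟩
  obtain ⟨y, hxy, hy⟩ := exists_covBy_le_of_lt hlt
  exact hxy.lt.not_ge (hx.2 (le_orthogonal_of_covBy hB hxy hy) hxy.le)

theorem isLagrangian_lagrangianProj (hR : B.IsRefl) (hN : B.Nondegenerate)
    (hx : IsLagrangian B x) (hu : u ≤ B.orthogonal u) : IsLagrangian B (lagrangianProj B u x) := by
  rw [IsLagrangian, lagrangianProj, orthogonal_sup hR, orthogonal_inf hR hN, hx,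
    BilinForm.orthogonal_orthogonal hN hR, inf_comm, sup_comm x, sup_inf_assoc_of_le x hu]

theorem inf_eq_inf_orthogonal_iff (hR : B.IsRefl) (hN : B.Nondegenerate) (hx : IsLagrangian B x)
    (hy : IsLagrangian B y) (huy : u ≤ y) :
    x ⊓ y = x ⊓ B.orthogonal u ↔ y = lagrangianProj B u x := by
  have hu : u ≤ B.orthogonal u := hy.le_orthogonal huy huy
  constructor
  · intro h
    refine (IsLagrangian.eq_of_le (isLagrangian_lagrangianProj hR hN hx hu) hy ?_).symm
    exact sup_le huy (h ▸ inf_le_right)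
  · rintro rfl
    exact inf_lagrangianProj hu

theorem finrank_inf_orthogonal_add_finrank (hR : B.IsRefl) (hN : B.Nondegenerate)
    (hx : IsLagrangian B x) (u : Submodule K V) :
    finrank K ↥(x ⊓ B.orthogonal u) + finrank K u = finrank K x + finrank K ↥(x ⊓ u) := by
  have horth : B.orthogonal (x ⊔ u) = x ⊓ B.orthogonal u := by rw [orthogonal_sup hR, hx]
  have hdim := finrank_orthogonal_add hN (x ⊔ u)
  have hmod := Submodule.finrank_sup_add_finrank_inf_eq x u
  have hlag := hx.two_mul_finrank hN
  rw [horth] at hdim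
  omega

theorem inf_orthogonal_covBy_iff (hR : B.IsRefl) (hN : B.Nondegenerate)
    (hx : IsLagrangian B x) : x ⊓ B.orthogonal u ⋖ x ↔ x ⊓ u ⋖ u := by
  have := finrank_inf_orthogonal_add_finrank hR hN hx u
  rw [covBy_iff_finrank_add_one inf_le_left, covBy_iff_finrank_add_one inf_le_right]
  omega

theorem inf_covBy_iff_of_not_le (hR : B.IsRefl) (hN : B.Nondegenerate) (hx : IsLagrangian B x)
    (hy : IsLagrangian B y) (huy : u ≤ y) (hux : ¬ u ≤ x) :
    x ⊓ y ⋖ x ↔ y = lagrangianProj B u x ∧ x ⊓ u ⋖ u := by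
  rw [← inf_eq_inf_orthogonal_iff hR hN hx hy huy, ← inf_orthogonal_covBy_iff hR hN hx]
  constructor
  · intro h
    have hne : x ⊓ B.orthogonal u ≠ x := fun heq =>
      hux (((le_orthogonal_comm hR).1 (inf_eq_left.1 heq)).trans_eq hx)
    have heq := (h.eq_or_eq (inf_le_inf_orthogonal hy huy) inf_le_left).resolve_right hne
    exact ⟨heq.symm, heq ▸ h⟩
  · rintro ⟨heq, h⟩
    rwa [heq]

end Lagrangian

section DualPolarGraph

open Module Matrix
open LinearMap (BilinForm)

variable {K V : Type*} [Field K] [AddCommGroup V] [Module K V]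
  {B : BilinForm K V} {u v w : Submodule K V}

/-- The Lagrangian subspaces containing `w`. When `w` is isotropic these are the maximal subspaces
of the polar space of `B.orthogonal w / w`. -/
abbrev LagrangianAbove (B : BilinForm K V) (w : Submodule K V) :=
  {x : Submodule K V // IsLagrangian B x ∧ w ≤ x}

/-- The indicator function of the Lagrangian subspaces that contain `u`, among those containing
`w`. -/
noncomputable def incidence (B : BilinForm K V) (w u : Submodule K V) : LagrangianAbove B w → ℝ :=
  fun x => if u ≤ x.1 then 1 else 0

theorem incidence_of_le {x : LagrangianAbove B w} (hux : u ≤ x.1) : incidence B w u x = 1 :=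
  if_pos hux

theorem incidence_of_not_le {x : LagrangianAbove B w} (hux : ¬ u ≤ x.1) : incidence B w u x = 0 :=
  if_neg hux

theorem incidence_eq_single (x : LagrangianAbove B w) : incidence B w x.1 = Pi.single x 1 := by
  ext y
  have hxy : x.1 ≤ y.1 ↔ y = x :=
    ⟨fun h => (Subtype.ext (x.2.1.eq_of_le y.2.1 h)).symm, fun h => h ▸ le_rfl⟩
  simp [incidence, hxy, Pi.single_apply]

variable [Fintype (Submodule K V)]

/-- The adjacency matrix of the dual polar graph on the Lagrangian subspaces containing `w`: two of
them are adjacent if they meet in a hyperplane. -/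
noncomputable def dualPolarMatrix (B : BilinForm K V) (w : Submodule K V) :
    Matrix (LagrangianAbove B w) (LagrangianAbove B w) ℝ :=
  adjMat fun x y => x.1 ⊓ y.1 ⋖ x.1

theorem dualPolarMatrix_mulVec_apply (f : LagrangianAbove B w → ℝ) (x : LagrangianAbove B w) :
    (dualPolarMatrix B w *ᵥ f) x = ∑ y with x.1 ⊓ y.1 ⋖ x.1, f y := by
  simp [dualPolarMatrix, adjMat, mulVec, dotProduct, sum_filter]

theorem incidence_dotProduct (f : LagrangianAbove B w → ℝ) :
    incidence B w u ⬝ᵥ f = ∑ y with u ≤ y.1, f y := by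
  simp [incidence, dotProduct, sum_filter]

theorem incidence_dotProduct_sub (x : LagrangianAbove B w) (hvx : v ⋖ x.1)
    (f : LagrangianAbove B w → ℝ) :
    incidence B w v ⬝ᵥ f - f x = ∑ y with x.1 ⊓ y.1 = v, f y := by
  have hmem (y : LagrangianAbove B w) : v ≤ y.1 ↔ y = x ∨ x.1 ⊓ y.1 = v := by
    constructor
    · intro h
      refine (hvx.eq_or_eq (le_inf hvx.le h) inf_le_left).symm.imp_left fun hxy => ?_
      exact (Subtype.ext (x.2.1.eq_of_le y.2.1 (inf_eq_left.1 hxy))).symm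
    · rintro (rfl | rfl)
      · exact hvx.le
      · exact inf_le_right
  rw [incidence_dotProduct, sub_eq_iff_eq_add', ← sum_insert (by simpa using hvx.ne')]
  exact sum_congr (by ext y; simp [hmem]) fun _ _ => rfl

theorem dualPolarMatrix_mulVec_eq_sum_hyperplanes (f : LagrangianAbove B w → ℝ)
    (x : LagrangianAbove B w) :
    (dualPolarMatrix B w *ᵥ f) x
      = ∑ v ∈ hyperplanes w x.1, (incidence B w v ⬝ᵥ f - f x) := by
  have hmaps (y : LagrangianAbove B w) (hy : y ∈ ({y | x.1 ⊓ y.1 ⋖ x.1} : Finset _)) :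
      x.1 ⊓ y.1 ∈ hyperplanes w x.1 :=
    mem_hyperplanes.2 ⟨le_inf x.2.2 y.2.2, (mem_filter.1 hy).2⟩
  rw [dualPolarMatrix_mulVec_apply, ← sum_fiberwise_of_maps_to hmaps]
  refine sum_congr rfl fun v hv => ?_
  rw [incidence_dotProduct_sub x (mem_hyperplanes.1 hv).2, filter_filter]
  refine sum_congr (filter_congr fun y _ => and_iff_right_of_imp ?_) fun _ _ => rfl
  rintro rfl
  exact (mem_hyperplanes.1 hv).2

theorem sum_incidence_hyperplanes_of_not_le (hwu : w ≤ u) (x : LagrangianAbove B w)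
    (hux : ¬ u ≤ x.1) :
    ∑ v ∈ hyperplanes w u, incidence B w v x = if x.1 ⊓ u ⋖ u then 1 else 0 := by
  have hfilter : {v ∈ hyperplanes w u | v ≤ x.1} = if x.1 ⊓ u ⋖ u then {x.1 ⊓ u} else ∅ := by
    ext v
    rw [mem_filter, mem_hyperplanes, and_assoc, covBy_and_le_iff_of_not_le hux]
    split_ifs with h
    · simp only [h, and_true, mem_singleton, and_iff_right_iff_imp]
      rintro rfl
      exact le_inf x.2.2 hwu
    · simp [h]
  simp only [incidence, sum_boole, hfilter]
  split_ifs <;> simp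

variable [FiniteDimensional K V]

theorem dualPolarMatrix_isSymm (hN : B.Nondegenerate) : (dualPolarMatrix B w).IsSymm := by
  ext x y
  have hx := x.2.1.two_mul_finrank hN
  have hy := y.2.1.two_mul_finrank hN
  have hxy : x.1 ⊓ y.1 ⋖ x.1 ↔ y.1 ⊓ x.1 ⋖ y.1 := by
    rw [covBy_iff_finrank_add_one inf_le_left, covBy_iff_finrank_add_one inf_le_left, inf_comm]
    omega
  simp [dualPolarMatrix, adjMat, hxy]

theorem mem_hyperplanes_orthogonal_iff (hB : B.IsAlt) (hN : B.Nondegenerate) {x y : Submodule K V}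
    (hx : IsLagrangian B x) (hvx : v ⋖ x) :
    y ∈ hyperplanes v (B.orthogonal v) ↔ v ≤ y ∧ IsLagrangian B y := by
  rw [mem_hyperplanes]
  refine and_congr_right fun hvy => ?_
  have hdimv := finrank_add_one_of_covBy hvx
  have hdimx := hx.two_mul_finrank hN
  have horth := finrank_orthogonal_add hN v
  constructor
  · intro hy
    have hdimy := finrank_add_one_of_covBy hy
    have hcov : v ⋖ y := (covBy_iff_finrank_add_one hvy).2 (by omega)
    exact (isLagrangian_iff_le_orthogonal_and_two_mul_finrank hN).2
      ⟨le_orthogonal_of_covBy hB hcov hy.le, by omega⟩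
  · intro hy
    have hdimy := hy.two_mul_finrank hN
    exact (covBy_iff_finrank_add_one (hy.le_orthogonal le_rfl hvy)).2 (by omega)

theorem dualPolarMatrix_mulVec_incidence_of_not_le (hR : B.IsRefl) (hN : B.Nondegenerate)
    (hwu : w ≤ u) (hu : u ≤ B.orthogonal u) (x : LagrangianAbove B w) (hux : ¬ u ≤ x.1) :
    (dualPolarMatrix B w *ᵥ incidence B w u) x = if x.1 ⊓ u ⋖ u then 1 else 0 := by
  let p : LagrangianAbove B w := ⟨lagrangianProj B u x.1,
    isLagrangian_lagrangianProj hR hN x.2.1 hu, hwu.trans le_sup_left⟩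
  have hfilter : ({y | x.1 ⊓ y.1 ⋖ x.1 ∧ u ≤ y.1} : Finset (LagrangianAbove B w))
      = if x.1 ⊓ u ⋖ u then {p} else ∅ := by
    ext y
    have hy : x.1 ⊓ y.1 ⋖ x.1 ∧ u ≤ y.1 ↔ y = p ∧ x.1 ⊓ u ⋖ u := by
      rw [Subtype.ext_iff]
      constructor
      · rintro ⟨h, huy⟩
        exact (inf_covBy_iff_of_not_le hR hN x.2.1 y.2.1 huy hux).1 h
      · rintro ⟨h, hcov⟩
        have huy : u ≤ y.1 := h ▸ le_sup_left
        exact ⟨(inf_covBy_iff_of_not_le hR hN x.2.1 y.2.1 huy hux).2 ⟨h, hcov⟩, huy⟩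
    split_ifs with h <;> simp [hy, h]
  rw [dualPolarMatrix_mulVec_apply]
  simp only [incidence, sum_boole, filter_filter, hfilter]
  split_ifs <;> simp

variable [Finite K]

theorem card_lagrangianAbove_ge (hB : B.IsAlt) (hN : B.Nondegenerate) (x : LagrangianAbove B w)
    (hwv : w ≤ v) (hvx : v ⋖ x.1) :
    #{y : LagrangianAbove B w | v ≤ y.1} = Nat.card K + 1 := by
  have hmap : ({y : LagrangianAbove B w | v ≤ y.1} : Finset _).map (Function.Embedding.subtype _)
      = hyperplanes v (B.orthogonal v) := by
    ext y
    rw [mem_hyperplanes_orthogonal_iff hB hN x.2.1 hvx]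
    simp only [mem_map, mem_filter, mem_univ, true_and, Function.Embedding.subtype_apply,
      Subtype.exists, exists_and_left, exists_prop, exists_eq_right_right]
    exact ⟨fun h => ⟨h.1, h.2.1⟩, fun h => ⟨h.1, h.2, hwv.trans h.1⟩⟩
  have hdimv := finrank_add_one_of_covBy hvx
  have hdimx := x.2.1.two_mul_finrank hN
  have horth := finrank_orthogonal_add hN v
  have htwo : finrank K (B.orthogonal v) - finrank K v = 2 := by omega
  rw [← card_map, hmap, card_hyperplanes (x.2.1.le_orthogonal hvx.le hvx.le), htwo]
  simp [qInteger, sum_range_succ, add_comm]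

theorem incidence_dotProduct_incidence_sub (hB : B.IsAlt) (hN : B.Nondegenerate)
    (x : LagrangianAbove B w) (hwv : w ≤ v) (hvx : v ⋖ x.1) (hux : u ≤ x.1) :
    incidence B w v ⬝ᵥ incidence B w u - incidence B w u x
      = if u ≤ v then (Nat.card K : ℝ) else 0 := by
  split_ifs with huv
  · have hone (y : LagrangianAbove B w) (hy : y ∈ ({y | v ≤ y.1} : Finset _)) :
        incidence B w u y = 1 := incidence_of_le (huv.trans (mem_filter.1 hy).2)
    rw [incidence_dotProduct, sum_congr rfl hone, sum_const,
      card_lagrangianAbove_ge hB hN x hwv hvx, incidence_of_le hux]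
    simp
  · rw [incidence_dotProduct_sub x hvx]
    refine sum_eq_zero fun y hy => incidence_of_not_le fun huy => huv ?_
    exact (le_inf hux huy).trans_eq (mem_filter.1 hy).2

theorem dualPolarMatrix_mulVec_incidence_of_le (hB : B.IsAlt) (hN : B.Nondegenerate) (hwu : w ≤ u)
    (x : LagrangianAbove B w) (hux : u ≤ x.1) :
    (dualPolarMatrix B w *ᵥ incidence B w u) x
      = Nat.card K * qInteger (Nat.card K) (finrank K x.1 - finrank K u) := by
  have hterm (v : Submodule K V) (hv : v ∈ hyperplanes w x.1) :
      incidence B w v ⬝ᵥ incidence B w u - incidence B w u x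
        = if u ≤ v then (Nat.card K : ℝ) else 0 :=
    incidence_dotProduct_incidence_sub hB hN x (mem_hyperplanes.1 hv).1 (mem_hyperplanes.1 hv).2 hux
  have hfilter : {v ∈ hyperplanes w x.1 | u ≤ v} = hyperplanes u x.1 := by
    ext v
    simp only [mem_filter, mem_hyperplanes]
    exact ⟨fun h => ⟨h.2, h.1.2⟩, fun h => ⟨⟨hwu.trans h.1, h.2⟩, h.1⟩⟩
  rw [dualPolarMatrix_mulVec_eq_sum_hyperplanes, sum_congr rfl hterm, ← sum_filter, hfilter,
    sum_const, card_hyperplanes hux, nsmul_eq_mul, mul_comm]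

theorem sum_incidence_hyperplanes_of_le (hwu : w ≤ u) (x : LagrangianAbove B w) (hux : u ≤ x.1) :
    ∑ v ∈ hyperplanes w u, incidence B w v x
      = qInteger (Nat.card K) (finrank K u - finrank K w) := by
  rw [← card_hyperplanes hwu, ← nsmul_one, ← sum_const]
  exact sum_congr rfl fun v hv => incidence_of_le ((mem_hyperplanes.1 hv).2.le.trans hux)

/-- The `i`-th eigenvalue `q * [m - i]_q - [i]_q` of the dual polar graph of a symplectic space of
dimension `2 * m` over a field of `q` elements. -/
def dualPolarEigenvalue (q m i : ℕ) : ℝ := q * qInteger q (m - i) - qInteger q i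

theorem dualPolarMatrix_mulVec_incidence (hB : B.IsAlt) (hN : B.Nondegenerate) {m : ℕ}
    (hm : finrank K V = 2 * (finrank K w + m)) (hwu : w ≤ u) (hu : u ≤ B.orthogonal u) :
    dualPolarMatrix B w *ᵥ incidence B w u
      = dualPolarEigenvalue (Nat.card K) m (finrank K u - finrank K w) • incidence B w u
        + ∑ v ∈ hyperplanes w u, incidence B w v := by
  ext x
  rw [Pi.add_apply, Pi.smul_apply, Finset.sum_apply, smul_eq_mul]
  by_cases hux : u ≤ x.1
  · have hdimx := x.2.1.two_mul_finrank hN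
    have hdimu := Submodule.finrank_mono hwu
    have hsub : finrank K x.1 - finrank K u = m - (finrank K u - finrank K w) := by omega
    rw [dualPolarMatrix_mulVec_incidence_of_le hB hN hwu x hux,
      sum_incidence_hyperplanes_of_le hwu x hux, incidence_of_le hux, dualPolarEigenvalue, hsub]
    ring
  · rw [dualPolarMatrix_mulVec_incidence_of_not_le hB.isRefl hN hwu hu x hux,
      sum_incidence_hyperplanes_of_not_le hwu x hux, incidence_of_not_le hux, mul_zero, zero_add]

theorem eigSet_dualPolarMatrix_subset (hB : B.IsAlt) (hN : B.Nondegenerate) {m : ℕ}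
    (hm : finrank K V = 2 * (finrank K w + m)) :
    eigSet (dualPolarMatrix B w) ⊆ dualPolarEigenvalue (Nat.card K) m '' Set.Iic m := by
  let χ (u : {u : Submodule K V // w ≤ u ∧ u ≤ B.orthogonal u}) := incidence B w u.1
  have hspan : Submodule.span ℝ (Set.range χ) = ⊤ := by
    rw [← top_le_iff, ← (Pi.basisFun ℝ (LagrangianAbove B w)).span_eq]
    refine Submodule.span_mono (Set.range_subset_iff.2 fun x => ⟨⟨x.1, x.2.2, x.2.1.ge⟩, ?_⟩)
    rw [Pi.basisFun_apply]
    exact incidence_eq_single x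
  have htri (u : {u : Submodule K V // w ≤ u ∧ u ≤ B.orthogonal u}) :
      dualPolarMatrix B w *ᵥ χ u
          - dualPolarEigenvalue (Nat.card K) m (finrank K u.1 - finrank K w) • χ u
        ∈ Submodule.span ℝ (χ '' Set.Iio u) := by
    rw [dualPolarMatrix_mulVec_incidence hB hN hm u.2.1 u.2.2, add_sub_cancel_left]
    refine Submodule.sum_mem _ fun v hv => Submodule.subset_span ?_
    obtain ⟨hwv, hvu⟩ := mem_hyperplanes.1 hv
    exact ⟨⟨v, hwv, hvu.le.trans (u.2.2.trans (BilinForm.orthogonal_le hvu.le))⟩, hvu.lt, rfl⟩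
  refine (eigSet_subset_range_of_isSymm (dualPolarMatrix_isSymm hN) hspan htri).trans ?_
  rintro _ ⟨u, rfl⟩
  have hdim := finrank_orthogonal_add hN u.1
  have hiso := Submodule.finrank_mono u.2.2
  exact ⟨_, Set.mem_Iic.2 (by omega), rfl⟩

theorem mul_qInteger_mem_eigSet_dualPolarMatrix (hB : B.IsAlt) (hN : B.Nondegenerate) {m : ℕ}
    (hm : finrank K V = 2 * (finrank K w + m)) (hw : w ≤ B.orthogonal w) :
    (Nat.card K * qInteger (Nat.card K) m : ℝ) ∈ eigSet (dualPolarMatrix B w) := by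
  obtain ⟨x, hx, hwx⟩ := exists_isLagrangian_ge hB hw
  refine ⟨incidence B w w, fun h0 => ?_, ?_⟩
  · have := congrFun h0 ⟨x, hx, hwx⟩
    rw [incidence_of_le hwx] at this
    exact one_ne_zero this
  · have hempty : hyperplanes w w = ∅ :=
      eq_empty_of_forall_notMem fun v hv =>
        (mem_hyperplanes.1 hv).2.lt.not_ge (mem_hyperplanes.1 hv).1
    rw [dualPolarMatrix_mulVec_incidence hB hN hm le_rfl hw, hempty]
    simp [dualPolarEigenvalue, qInteger]

theorem incidence_dotProduct_neg_card_pow_finrank_inf (hB : B.IsAlt) (hN : B.Nondegenerate)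
    (x₀ x : LagrangianAbove B w) (hwv : w ≤ v) (hvx : v ⋖ x.1) :
    incidence B w v ⬝ᵥ (fun y => (-Nat.card K : ℝ) ^ finrank K ↥(x₀.1 ⊓ y.1)) = 0 := by
  have hv : v ≤ B.orthogonal v := x.2.1.le_orthogonal hvx.le hvx.le
  let p : LagrangianAbove B w := ⟨lagrangianProj B v x₀.1,
    isLagrangian_lagrangianProj hB.isRefl hN x₀.2.1 hv, hwv.trans le_sup_left⟩
  have hdim : finrank K ↥(x₀.1 ⊓ B.orthogonal v) = finrank K ↥(x₀.1 ⊓ v) + 1 := by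
    have := finrank_inf_orthogonal_add_finrank hB.isRefl hN x₀.2.1 v
    have := x₀.2.1.two_mul_finrank hN
    have := x.2.1.two_mul_finrank hN
    have := finrank_add_one_of_covBy hvx
    omega
  have hp : p ∈ ({y | v ≤ y.1} : Finset (LagrangianAbove B w)) :=
    mem_filter.2 ⟨mem_univ p, le_sup_left⟩
  have hother (y : LagrangianAbove B w)
      (hy : y ∈ ({y | v ≤ y.1} : Finset (LagrangianAbove B w)).erase p) :
      (-Nat.card K : ℝ) ^ finrank K ↥(x₀.1 ⊓ y.1) = (-Nat.card K : ℝ) ^ finrank K ↥(x₀.1 ⊓ v) := by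
    obtain ⟨hyp, hvy⟩ : y ≠ p ∧ v ≤ y.1 := by simpa using hy
    have hne : x₀.1 ⊓ y.1 ≠ x₀.1 ⊓ B.orthogonal v := fun h => hyp <| Subtype.ext <|
      (inf_eq_inf_orthogonal_iff hB.isRefl hN x₀.2.1 y.2.1 hvy).1 h
    have hlt := Submodule.finrank_lt_finrank_of_lt
      ((inf_le_inf_orthogonal y.2.1 hvy).lt_of_ne hne)
    have hle := Submodule.finrank_mono (inf_le_inf_left x₀.1 hvy)
    congr 1
    omega
  rw [incidence_dotProduct, ← add_sum_erase _ _ hp, sum_congr rfl hother, sum_const,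
    card_erase_of_mem hp, card_lagrangianAbove_ge hB hN x hwv hvx, inf_lagrangianProj hv, hdim]
  simp [pow_succ]
  ring

theorem neg_qInteger_mem_eigSet_dualPolarMatrix (hB : B.IsAlt) (hN : B.Nondegenerate) {m : ℕ}
    (hm : finrank K V = 2 * (finrank K w + m)) (hw : w ≤ B.orthogonal w) :
    (-qInteger (Nat.card K) m : ℝ) ∈ eigSet (dualPolarMatrix B w) := by
  obtain ⟨x₀, hx₀, hwx₀⟩ := exists_isLagrangian_ge hB hw
  refine ⟨fun y => (-Nat.card K : ℝ) ^ finrank K ↥(x₀ ⊓ y.1), fun h0 => ?_, ?_⟩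
  · have hne : (-Nat.card K : ℝ) ≠ 0 := by simp [Nat.card_pos.ne']
    exact pow_ne_zero _ hne (congrFun h0 ⟨x₀, hx₀, hwx₀⟩)
  · ext x
    have hdim := x.2.1.two_mul_finrank hN
    have hsub : finrank K x.1 - finrank K w = m := by omega
    rw [dualPolarMatrix_mulVec_eq_sum_hyperplanes, sum_congr rfl fun v hv => by
      rw [incidence_dotProduct_neg_card_pow_finrank_inf hB hN ⟨x₀, hx₀, hwx₀⟩ x
        (mem_hyperplanes.1 hv).1 (mem_hyperplanes.1 hv).2], sum_const, card_hyperplanes x.2.2, hsub]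
    simp

theorem abs_dualPolarEigenvalue_le {q m i : ℕ} (hi : 0 < i) (him : i ≤ m) :
    |dualPolarEigenvalue q m i| ≤ qInteger q m := by
  have hupper : q * qInteger q (m - i) ≤ qInteger q m := by
    obtain ⟨j, rfl⟩ := Nat.exists_eq_add_of_le' hi
    calc q * qInteger q (m - (j + 1)) ≤ qInteger q (m - (j + 1) + 1) := by simp [qInteger_succ]
      _ ≤ qInteger q m := qInteger_mono q (by omega)
  have hlower : qInteger q i ≤ qInteger q m := qInteger_mono q him
  rw [dualPolarEigenvalue]
  exact abs_sub_le_of_nonneg_of_le (by positivity) (by exact_mod_cast hupper) (by positivity)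
    (by exact_mod_cast hlower)

theorem eq_or_abs_le_of_mem_eigSet_dualPolarMatrix (hB : B.IsAlt) (hN : B.Nondegenerate) {m : ℕ}
    (hm : finrank K V = 2 * (finrank K w + m)) {μ : ℝ} (hμ : μ ∈ eigSet (dualPolarMatrix B w)) :
    μ = Nat.card K * qInteger (Nat.card K) m ∨ |μ| ≤ qInteger (Nat.card K) m := by
  obtain ⟨i, hi, rfl⟩ := eigSet_dualPolarMatrix_subset hB hN hm hμ
  obtain rfl | hi0 := i.eq_zero_or_pos
  · exact Or.inl (by simp [dualPolarEigenvalue, qInteger])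
  · exact Or.inr (abs_dualPolarEigenvalue_le hi0 hi)

theorem qInteger_lt_card_mul_qInteger {m : ℕ} (hm : 0 < m) :
    (qInteger (Nat.card K) m : ℝ) < Nat.card K * qInteger (Nat.card K) m := by
  have hpos : 0 < qInteger (Nat.card K) m := qInteger_pos hm
  have hK : 1 < Nat.card K := Finite.one_lt_card
  exact_mod_cast lt_mul_of_one_lt_left hpos hK

theorem maxEig_dualPolarMatrix (hB : B.IsAlt) (hN : B.Nondegenerate) {m : ℕ}
    (hm : finrank K V = 2 * (finrank K w + m)) (hm0 : 0 < m) (hw : w ≤ B.orthogonal w) :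
    maxEig (dualPolarMatrix B w) = Nat.card K * qInteger (Nat.card K) m :=
  maxEig_eq_of_forall_eq_or_abs_le (mul_qInteger_mem_eigSet_dualPolarMatrix hB hN hm hw)
    (qInteger_lt_card_mul_qInteger hm0)
    fun _ => eq_or_abs_le_of_mem_eigSet_dualPolarMatrix hB hN hm

theorem specParam_dualPolarMatrix (hB : B.IsAlt) (hN : B.Nondegenerate) {m : ℕ}
    (hm : finrank K V = 2 * (finrank K w + m)) (hm0 : 0 < m) (hw : w ≤ B.orthogonal w) :
    specParam (dualPolarMatrix B w) = qInteger (Nat.card K) m :=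
  specParam_eq_of_forall_eq_or_abs_le (mul_qInteger_mem_eigSet_dualPolarMatrix hB hN hm hw)
    ⟨_, neg_qInteger_mem_eigSet_dualPolarMatrix hB hN hm hw, by simp⟩
    (qInteger_lt_card_mul_qInteger hm0)
    fun _ => eq_or_abs_le_of_mem_eigSet_dualPolarMatrix hB hN hm

end DualPolarGraph

section BinarySymplectic

open Module
open LinearMap (BilinForm)

variable {n : ℕ} {w x y : Submodule F2 (PV n)}

/-- The symplectic product on `F2^{2n}` as a bilinear form. -/
def sympForm (n : ℕ) : BilinForm F2 (PV n) :=
  LinearMap.mk₂ F2 symp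
    (fun a b c => by simp only [symp, Prod.fst_add, Prod.snd_add, Pi.add_apply, add_mul,
      sum_add_distrib]; ring)
    (fun c a b => by simp [symp, mul_sum, mul_add, mul_assoc])
    (fun a b c => by simp only [symp, Prod.fst_add, Prod.snd_add, Pi.add_apply, mul_add,
      sum_add_distrib]; ring)
    (fun c a b => by simp [symp, mul_sum, mul_add, mul_left_comm])

theorem sympForm_apply (a b : PV n) : sympForm n a b = symp a b := rfl

theorem sympForm_isAlt : (sympForm n).IsAlt := fun a => by
  simp [sympForm_apply, symp, mul_comm, CharTwo.add_self_eq_zero]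

theorem sympForm_nondegenerate : (sympForm n).Nondegenerate := by
  refine sympForm_isAlt.isRefl.nondegenerate_iff_separatingLeft.2 fun a ha => ?_
  have h₁ (i : Fin n) : a.1 i = 0 := by
    simpa [sympForm_apply, symp, Pi.single_apply] using ha (0, Pi.single i 1)
  have h₂ (i : Fin n) : a.2 i = 0 := by
    simpa [sympForm_apply, symp, Pi.single_apply] using ha (Pi.single i 1, 0)
  exact Prod.ext (funext h₁) (funext h₂)

theorem finrank_PV : finrank F2 (PV n) = 2 * n := by
  simp [two_mul]

theorem isIsotropic_iff_le_orthogonal : IsIsotropic x ↔ x ≤ (sympForm n).orthogonal x :=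
  ⟨fun h _ hb a ha => h a ha _ hb, fun h a ha _ hb => h hb a ha⟩

theorem mem_Lset_self_iff : x ∈ Lset n n ↔ IsLagrangian (sympForm n) x := by
  rw [isLagrangian_iff_le_orthogonal_and_two_mul_finrank sympForm_nondegenerate, finrank_PV,
    ← isIsotropic_iff_le_orthogonal, Nat.mul_right_inj two_ne_zero]
  rfl

theorem lt_orthogonal_of_mem_Lset {k : ℕ} (hkn : k < n) (hw : w ∈ Lset n k) :
    w < (sympForm n).orthogonal w := by
  refine (isIsotropic_iff_le_orthogonal.1 hw.1).lt_of_ne fun h => hkn.ne ?_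
  exact hw.2.symm.trans (mem_Lset_self_iff.2 h.symm).2

theorem finrank_inf_eq_sub_one_iff_covBy (hn : 0 < n) (hx : x ∈ Lset n n) :
    finrank F2 ↥(x ⊓ y) = n - 1 ↔ x ⊓ y ⋖ x := by
  rw [covBy_iff_finrank_add_one inf_le_left, hx.2]
  omega

/-- The vertices of `G'_n` as Lagrangian subspaces containing `w`. -/
def gVtxEquiv (w : Submodule F2 (PV n)) : GVtx n w ≃ LagrangianAbove (sympForm n) w :=
  Equiv.subtypeEquivRight fun _ => and_congr_left' mem_Lset_self_iff

theorem adjG_eq_submatrix (hn : 0 < n) (w : Submodule F2 (PV n)) :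
    adjG n w (n - 1) = (dualPolarMatrix (sympForm n) w).submatrix (gVtxEquiv w) (gVtxEquiv w) := by
  ext x y
  simp [adjG, dualPolarMatrix, adjMat, gVtxEquiv, finrank_inf_eq_sub_one_iff_covBy hn x.2.1]

end BinarySymplectic

open Module in
theorem spectral_ratio_G'_tendsto_half_general {K V : Type*} [Field K] [Finite K] [AddCommGroup V]
    [Module K V] [FiniteDimensional K V] [Fintype (Submodule K V)] {B : LinearMap.BilinForm K V}
    (hB : B.IsAlt) (hN : B.Nondegenerate) {w : Submodule K V} (hw : w < B.orthogonal w) :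
    specParam (dualPolarMatrix B w) / maxEig (dualPolarMatrix B w) = 1 / Nat.card K := by
  obtain ⟨x, hx, hwx⟩ := exists_isLagrangian_ge hB hw.le
  have hlt : w < x := hwx.lt_of_ne fun h => hw.ne' (h ▸ hx)
  obtain ⟨m, hm⟩ := Nat.exists_eq_add_of_lt (Submodule.finrank_lt_finrank_of_lt hlt)
  have hdim : finrank K V = 2 * (finrank K w + (m + 1)) := by
    rw [← hx.two_mul_finrank hN, hm, add_assoc]
  have hpos : (qInteger (Nat.card K) (m + 1) : ℝ) ≠ 0 :=
    Nat.cast_ne_zero.2 (qInteger_pos m.succ_pos).ne'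
  rw [specParam_dualPolarMatrix hB hN hdim m.succ_pos hw.le,
    maxEig_dualPolarMatrix hB hN hdim m.succ_pos hw.le, div_mul_cancel_right₀ hpos, one_div]

/-- **The spectral ratio of `G'_n` tends to `1/2`** (equivalently, `log₂ R_n → −1`), where
`G'_n` is the graph on the maximal isotropic subspaces containing a fixed `w ∈ L^n_1` with
`x ∼ y` iff `dim(x∩y) = n−1`. -/
theorem spectral_ratio_G'_tendsto_half :
    ∀ ε : ℝ, 0 < ε → ∃ N : ℕ, ∀ n : ℕ, N ≤ n → ∀ w ∈ Lset n 1,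
      |specParam (adjG n w (n - 1)) / maxEig (adjG n w (n - 1)) - 1 / 2| < ε :=
  fun ε hε => ⟨2, fun n hn w hw => by
    rw [adjG_eq_submatrix (Nat.zero_lt_of_lt hn), specParam_submatrix, maxEig_submatrix,
      spectral_ratio_G'_tendsto_half_general sympForm_isAlt sympForm_nondegenerate
        (lt_orthogonal_of_mem_Lset hn hw), Nat.card_zmod]
    simpa using hε⟩
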